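/- arXiv:2009.00150 — 2 statements merged into one kernel-verified Lean document; each statement's English description precedes it below -/
import Mathlib

section
/- Let (Ω, ℱ, P) be a probability space with a filtration (ℱ_k)_{k∈ℕ}, let ν : Ω → ℕ be a measurable random variable (the change time), and define M̂_k := P(ν ≤ k | ℱ_k) = E[1_{{ν ≤ k}} | ℱ_k]. Let h ∈ [0,1] and let τ be a stopping time with respect to (ℱ_k) that is almost surely finite and satisfies M̂_τ ≥ h almost surely (as holds for the threshold rule τ = inf{k ≥ 0 : M̂_k ≥ h} whenever it is almost surely finite). Then the probability of false alarm satisfies PFA(τ) := P(τ < ν) ≤ 1 − h. -/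
open MeasureTheory Finset
open scoped ENNReal

/-- If the conditional probability of `B` given `m₀` is at least `h` on an `m₀`-measurable set `A`,
then the part of `A` outside `B` has measure at most `(1 - h) * μ A`. -/
lemma measure_diff_le_of_le_condExp_indicator {Ω : Type*} {m₀ m : MeasurableSpace Ω}
    {μ : Measure Ω} [IsFiniteMeasure μ] (hm : m₀ ≤ m) {A B : Set Ω}
    (hA : MeasurableSet[m₀] A) (hB : MeasurableSet B) {h : ℝ} (hh : h ≤ 1)
    (hle : ∀ᵐ ω ∂μ, ω ∈ A → h ≤ (μ[B.indicator (fun _ => (1 : ℝ)) | m₀]) ω) :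
    μ (A \ B) ≤ ENNReal.ofReal (1 - h) * μ A := by
  have hint : Integrable (B.indicator fun _ => (1 : ℝ)) μ :=
    (integrable_const 1).indicator hB
  have hlower : h * μ.real A ≤ μ.real (A ∩ B) := by
    calc h * μ.real A = ∫ _ in A, h ∂μ := by simp [mul_comm]
      _ ≤ ∫ ω in A, (μ[B.indicator (fun _ => (1 : ℝ)) | m₀]) ω ∂μ :=
        setIntegral_mono_on_ae integrableOn_const integrable_condExp.integrableOn (hm _ hA) hle
      _ = ∫ ω in A, B.indicator (fun _ => (1 : ℝ)) ω ∂μ := setIntegral_condExp hm hint hA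
      _ = μ.real (A ∩ B) := by simp [setIntegral_indicator hB]
  have hsplit : μ.real (A ∩ B) + μ.real (A \ B) = μ.real A := measureReal_inter_add_sdiff hB
  rw [← ofReal_measureReal (s := A), ← ofReal_measureReal (s := A \ B),
    ← ENNReal.ofReal_mul (sub_nonneg.2 hh)]
  exact ENNReal.ofReal_le_ofReal (by linarith)

/-- **PFA bound.** If `M̂_k := P(ν ≤ k | ℱ_k)`, `h ∈ [0,1]`, and `τ` is an a.s. finite
stopping time with `M̂_τ ≥ h` a.s., then the probability of false alarm satisfies
`P(τ < ν) ≤ 1 − h`. -/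
theorem probability_false_alarm_le
    {Ω : Type*} {m : MeasurableSpace Ω} (μ : Measure Ω) [IsProbabilityMeasure μ]
    (ℱ : Filtration ℕ m) (ν : Ω → ℕ) (hν : Measurable ν)
    (Mhat : ℕ → Ω → ℝ)
    (hMhat : ∀ k, Mhat k = μ[Set.indicator {ω | ν ω ≤ k} (fun _ => (1 : ℝ)) | ℱ k])
    (h : ℝ) (hh : h ∈ Set.Icc (0 : ℝ) 1)
    (τ : Ω → ℕ∞)
    (hτ : ∀ k : ℕ, MeasurableSet[ℱ k] {ω | τ ω = (k : ℕ∞)})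
    (hτfin : ∀ᵐ ω ∂μ, τ ω ≠ ⊤)
    (hthresh : ∀ᵐ ω ∂μ, h ≤ Mhat (τ ω).toNat ω) :
    μ {ω | τ ω < (ν ω : ℕ∞)} ≤ ENNReal.ofReal (1 - h) := by
  have hA : ∀ k : ℕ, MeasurableSet {ω | τ ω = (k : ℕ∞)} := fun k => ℱ.le k _ (hτ k)
  have hdiff (k : ℕ) : μ ({ω | τ ω = (k : ℕ∞)} \ {ω | ν ω ≤ k}) ≤
      ENNReal.ofReal (1 - h) * μ {ω | τ ω = (k : ℕ∞)} := by
    refine measure_diff_le_of_le_condExp_indicator (ℱ.le k) (hτ k) (hν measurableSet_Iic) hh.2 ?_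
    filter_upwards [hthresh] with ω hω (hk : τ ω = k)
    rwa [hk, ENat.toNat_natCast, hMhat] at hω
  have hdisj : Pairwise (Function.onFun Disjoint fun k : ℕ => {ω | τ ω = (k : ℕ∞)}) :=
    fun i j hij => Set.disjoint_left.2 fun ω (hi : τ ω = i) (hj : τ ω = j) =>
      hij (by exact_mod_cast hi.symm.trans hj)
  calc μ {ω | τ ω < (ν ω : ℕ∞)}
      ≤ μ (⋃ k : ℕ, {ω | τ ω = (k : ℕ∞)} \ {ω | ν ω ≤ k}) := by
        refine measure_mono fun ω (hω : τ ω < ν ω) => ?_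
        obtain ⟨k, hk⟩ := ENat.ne_top_iff_exists.1 hω.ne_top
        rw [← hk, Nat.cast_lt] at hω
        exact Set.mem_iUnion.2 ⟨k, hk.symm, not_le.2 hω⟩
    _ ≤ ∑' k : ℕ, μ ({ω | τ ω = (k : ℕ∞)} \ {ω | ν ω ≤ k}) := measure_iUnion_le _
    _ ≤ ∑' k : ℕ, ENNReal.ofReal (1 - h) * μ {ω | τ ω = (k : ℕ∞)} := ENNReal.tsum_le_tsum hdiff
    _ = ENNReal.ofReal (1 - h) * μ (⋃ k : ℕ, {ω | τ ω = (k : ℕ∞)}) := by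
        rw [ENNReal.tsum_mul_left, measure_iUnion hdisj hA]
    _ ≤ ENNReal.ofReal (1 - h) := mul_le_of_le_one_right' prob_le_one
end

section
/- Let N_α ≥ 1, N_β ≥ 1 and N = N_α + N_β. Let Δ = {z ∈ ℝ^N : z_i ≥ 0 for all i and ∑_i z_i = 1} be the standard probability simplex and let M : ℝ^N → ℝ be the linear map M(z) = ∑_{i < N_α} z_i. Suppose V : ℝ^N → ℝ is concave on Δ, satisfies 0 ≤ V(z) ≤ M(z) for all z ∈ Δ, and is constant on the level sets of M in Δ (i.e. V(z) = V(z′) whenever z, z′ ∈ Δ and M(z) = M(z′)). Then, with R := {z ∈ Δ : V(z) = M(z)}, there exists h ∈ [0,1] such that {z ∈ Δ : M(z) < h} ⊆ R ⊆ {z ∈ Δ : M(z) ≤ h}; that is, membership in the stopping set is determined (up to its boundary level) by comparing M(z) to a single threshold. -/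
open Finset

/-- If a concave function `V ≤ M`, with `M` linear, depends only on `M` and touches it at a point `e`
where `M e = 0`, then it touches `M` at every point whose `M`-value lies between `0` and that of
another contact point `w`. -/
theorem ConcaveOn.eq_linearMap_of_lt {E : Type*} [AddCommGroup E] [Module ℝ E] {s : Set E}
    {V : E → ℝ} {M : E →ₗ[ℝ] ℝ} (hV : ConcaveOn ℝ s V) (hle : ∀ z ∈ s, V z ≤ M z)
    (hlevel : ∀ z ∈ s, ∀ z' ∈ s, M z = M z' → V z = V z')
    {e w z : E} (he : e ∈ s) (hMe : M e = 0) (hVe : V e = 0)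
    (hw : w ∈ s) (hVw : V w = M w) (hz : z ∈ s) (hz0 : 0 ≤ M z) (hzw : M z < M w) :
    V z = M z := by
  have hw0 : 0 < M w := hz0.trans_lt hzw
  have ht0 : 0 ≤ M z / M w := div_nonneg hz0 hw0.le
  have ht1 : 0 ≤ 1 - M z / M w := sub_nonneg.2 ((div_le_one hw0).2 hzw.le)
  have hmul : M z / M w * M w = M z := div_mul_cancel₀ _ hw0.ne'
  have hmem := hV.1 hw he ht0 ht1 (by ring)
  have hconc := hV.2 hw he ht0 ht1 (by ring)
  rw [hVe, hVw, smul_zero, add_zero, smul_eq_mul, hmul] at hconc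
  refine le_antisymm (hle z hz) (hconc.trans_eq (hlevel _ hmem _ hz ?_))
  rw [map_add, map_smul, map_smul, hMe, smul_zero, add_zero, smul_eq_mul, hmul]

/-- **Corollary 1 (threshold structure).** If in addition `V` is constant on the level
sets of `M` in `Δ`, then the stopping set `R = {z ∈ Δ : V(z) = M(z)}` is determined by a
single threshold `h ∈ [0,1]`: `{z ∈ Δ : M(z) < h} ⊆ R ⊆ {z ∈ Δ : M(z) ≤ h}`. -/
theorem stopping_set_is_threshold_set
    (Nα Nβ : ℕ) (hNα : 1 ≤ Nα) (hNβ : 1 ≤ Nβ)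
    (Δ : Set (Fin (Nα + Nβ) → ℝ))
    (hΔ : Δ = {z | (∀ i, 0 ≤ z i) ∧ ∑ i, z i = 1})
    (M : (Fin (Nα + Nβ) → ℝ) → ℝ)
    (hM : ∀ z, M z = ∑ i ∈ Finset.univ.filter (fun i : Fin (Nα + Nβ) => (i : ℕ) < Nα), z i)
    (V : (Fin (Nα + Nβ) → ℝ) → ℝ)
    (hVconc : ConcaveOn ℝ Δ V)
    (hVbd : ∀ z ∈ Δ, 0 ≤ V z ∧ V z ≤ M z)
    (hVlevel : ∀ z ∈ Δ, ∀ z' ∈ Δ, M z = M z' → V z = V z') :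
    ∃ h ∈ Set.Icc (0 : ℝ) 1,
      {z ∈ Δ | M z < h} ⊆ {z ∈ Δ | V z = M z} ∧
      {z ∈ Δ | V z = M z} ⊆ {z ∈ Δ | M z ≤ h} := by
  obtain ⟨L, hL⟩ : ∃ L : (Fin (Nα + Nβ) → ℝ) →ₗ[ℝ] ℝ, ∀ z, L z = M z :=
    ⟨∑ i ∈ Finset.univ.filter (fun i : Fin (Nα + Nβ) => (i : ℕ) < Nα), LinearMap.proj i,
      fun z => by simp [hM]⟩
  obtain ⟨e, he, hMe⟩ : ∃ e ∈ Δ, M e = 0 := by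
    refine ⟨Pi.single ⟨Nα, by omega⟩ 1, ?_, ?_⟩
    · rw [hΔ]
      exact single_mem_stdSimplex ℝ _
    · rw [hM]
      refine Finset.sum_eq_zero fun i hi => Pi.single_eq_of_ne ?_ _
      rintro rfl
      simp at hi
  have hVe : V e = 0 := le_antisymm ((hVbd e he).2.trans_eq hMe) (hVbd e he).1
  have hM1 : ∀ z ∈ Δ, M z ≤ 1 := by
    intro z hz
    rw [hΔ] at hz
    rw [hM, ← hz.2]
    exact Finset.sum_le_sum_of_subset_of_nonneg (Finset.filter_subset _ _) fun i _ _ => hz.1 i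
  have hmem : (0 : ℝ) ∈ M '' {z ∈ Δ | V z = M z} := ⟨e, ⟨he, hVe.trans hMe.symm⟩, hMe⟩
  have hub : ∀ x ∈ M '' {z ∈ Δ | V z = M z}, x ≤ 1 := by
    rintro _ ⟨z, hz, rfl⟩
    exact hM1 z hz.1
  refine ⟨sSup (M '' {z ∈ Δ | V z = M z}), ⟨le_csSup ⟨1, hub⟩ hmem, csSup_le ⟨0, hmem⟩ hub⟩,
    ?_, fun z hz => ⟨hz.1, le_csSup ⟨1, hub⟩ ⟨z, hz, rfl⟩⟩⟩
  rintro z ⟨hz, hzh⟩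
  obtain ⟨_, ⟨w, ⟨hw, hVw⟩, rfl⟩, hzw⟩ := exists_lt_of_lt_csSup ⟨0, hmem⟩ hzh
  simp only [← hL] at hVbd hVlevel hMe hVw hzw
  exact ⟨hz, (hVconc.eq_linearMap_of_lt (fun x hx => (hVbd x hx).2) hVlevel he hMe hVe hw hVw hz
    ((hVbd z hz).1.trans (hVbd z hz).2) hzw).trans (hL z)⟩
end
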